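/- Suppose W = 𝟙 cᵀ with c_j > 0 for all j and Σ_j c_j = 1, let θ_i ∈ [0,1] for all i satisfy Σ_j c_j θ_j > 0 and the balance condition c_i (1 − θ_i) = c_j (1 − θ_j) for all i, j ∈ V, and let ω ∈ (0,1). Fix 1 ≤ K ≤ n and let S₁ ⊆ V be any K-element set consisting of indices of the K smallest stubbornness values, i.e., θ_i ≤ θ_j for every i ∈ S₁ and j ∉ S₁. Then S₁ maximizes the influencer's social power under the budget K: sp₀(S₁) ≥ sp₀(S) for every S ⊆ V with |S| ≤ K. -/

import Mathlib

open Matrix Finset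

/-- `H(S) = (I - ω Σ_{j∈S} e_j e_jᵀ) (I - Θ) W`. -/
noncomputable def Hmat {n : ℕ} (W : Matrix (Fin n) (Fin n) ℝ) (θ : Fin n → ℝ) (ω : ℝ)
    (S : Finset (Fin n)) : Matrix (Fin n) (Fin n) ℝ :=
  (1 - Matrix.diagonal (fun i => if i ∈ S then ω else 0)) *
    ((1 - Matrix.diagonal θ) * W)

/-- `p₀(S) = (I - H(S))⁻¹ (I - Θ) ω Σ_{j∈S} e_j`. -/
noncomputable def p0vec {n : ℕ} (W : Matrix (Fin n) (Fin n) ℝ) (θ : Fin n → ℝ) (ω : ℝ)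
    (S : Finset (Fin n)) : Fin n → ℝ :=
  ((1 - Hmat W θ ω S)⁻¹ * (1 - Matrix.diagonal θ)).mulVec
    (fun j => if j ∈ S then ω else 0)

/-- The influencer's social power `sp₀(S) = (𝟙ᵀ p₀(S) + 1)/(n+1)`. -/
noncomputable def sp0 {n : ℕ} (W : Matrix (Fin n) (Fin n) ℝ) (θ : Fin n → ℝ) (ω : ℝ)
    (S : Finset (Fin n)) : ℝ :=
  ((∑ i, p0vec W θ ω S i) + 1) / (n + 1)

/-- The rank-one matrix `𝟙 cᵀ`. -/
def rankOne {n : ℕ} (c : Fin n → ℝ) : Matrix (Fin n) (Fin n) ℝ :=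
  Matrix.of fun _ j => c j

/-!
For `W = 𝟙 cᵀ` the matrix `I - H(S)` is a rank-one perturbation of the identity, so Sherman–Morrison
gives `p₀(S)` in closed form. With `D = Σ (1 - θ_i)`, `τ = 1 - Σ c_i (1 - θ_i)`,
`B = ω Σ_{i∈S} (1 - θ_i)` and `X = ω Σ_{i∈S} c_i (1 - θ_i)` it reads
`𝟙ᵀ p₀(S) = D - (D - B) τ / (τ + X)`, which increases with both `B` and `X`. A set that collects
the largest values of both `1 - θ_i` and `c_i (1 - θ_i)` is therefore optimal, and under the balance
condition the values `c_i (1 - θ_i)` all tie.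
-/

section RankOnePerturbation

variable {m R 𝕜 : Type*} [Fintype m] [DecidableEq m] [CommRing R] [Field 𝕜]

lemma det_one_sub_vecMulVec (u v : m → R) : (1 - vecMulVec u v).det = 1 - v ⬝ᵥ u := by
  rw [sub_eq_add_neg, ← neg_vecMulVec, vecMulVec_eq Unit,
    det_one_add_replicateCol_mul_replicateRow, dotProduct_neg, ← sub_eq_add_neg]

lemma inv_one_sub_vecMulVec_mulVec (u v w : m → 𝕜) (h : 1 - v ⬝ᵥ u ≠ 0) :
    (1 - vecMulVec u v)⁻¹ *ᵥ w = w + (v ⬝ᵥ w / (1 - v ⬝ᵥ u)) • u := by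
  have hdet : IsUnit (1 - vecMulVec u v).det := by
    rwa [det_one_sub_vecMulVec, isUnit_iff_ne_zero]
  have := invertibleOfIsUnitDet _ hdet
  apply inv_mulVec_eq_vec
  ext i
  simp only [sub_mulVec, one_mulVec, vecMulVec_mulVec, dotProduct_add, dotProduct_smul,
    Pi.sub_apply, Pi.add_apply, Pi.smul_apply, smul_eq_mul, MulOpposite.smul_eq_mul_unop,
    MulOpposite.unop_op]
  field_simp
  ring

end RankOnePerturbation

lemma sum_le_sum_of_card_le_of_forall_notMem_le {ι M : Type*} [AddCommMonoid M] [LinearOrder M]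
    [IsOrderedCancelAddMonoid M] {f : ι → M} {s t : Finset ι} (hf : ∀ i, 0 ≤ f i)
    (hcard : #s ≤ #t) (htop : ∀ i ∈ t, ∀ j ∉ t, f j ≤ f i) :
    ∑ i ∈ s, f i ≤ ∑ i ∈ t, f i := by
  classical
  rw [← sum_sdiff_le_sum_sdiff]
  obtain hempty | hne := (s \ t).eq_empty_or_nonempty
  · simpa only [hempty, sum_empty] using sum_nonneg fun i _ => hf i
  · obtain ⟨j, hj, hmax⟩ := exists_max_image (s \ t) f hne
    calc ∑ i ∈ s \ t, f i ≤ #(s \ t) • f j := sum_le_card_nsmul _ _ _ hmax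
      _ ≤ #(t \ s) • f j := nsmul_le_nsmul_left (hf j) (card_sdiff_le_card_sdiff_iff.2 hcard)
      _ ≤ ∑ i ∈ t \ s, f i := card_nsmul_le_sum _ _ _ fun i hi =>
        htop i (mem_sdiff.1 hi).1 j (mem_sdiff.1 hj).2

section SocialPower

variable {n : ℕ} {c θ : Fin n → ℝ} {ω : ℝ} {S T : Finset (Fin n)}

/-- The vector `(I - Θ) ω Σ_{j∈S} e_j`: the weight each agent puts directly on the influencer. -/
def directInfluence (θ : Fin n → ℝ) (ω : ℝ) (S : Finset (Fin n)) : Fin n → ℝ :=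
  fun i => if i ∈ S then ω * (1 - θ i) else 0

lemma sum_directInfluence : ∑ i, directInfluence θ ω S i = ω * ∑ i ∈ S, (1 - θ i) := by
  simp only [directInfluence, sum_ite_mem, univ_inter, mul_sum]

lemma dotProduct_directInfluence :
    c ⬝ᵥ directInfluence θ ω S = ω * ∑ i ∈ S, c i * (1 - θ i) := by
  simp only [dotProduct, directInfluence, mul_ite, mul_zero, sum_ite_mem, univ_inter, mul_sum,
    mul_left_comm]

lemma Hmat_rankOne :
    Hmat (rankOne c) θ ω S = vecMulVec (1 - θ - directInfluence θ ω S) c := by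
  ext i j
  simp only [Hmat, rankOne, directInfluence, ← diagonal_one, diagonal_sub, diagonal_mul, of_apply,
    vecMulVec_apply, Pi.sub_apply, Pi.one_apply]
  split_ifs <;> ring

lemma p0vec_eq_inv_mulVec_directInfluence (W : Matrix (Fin n) (Fin n) ℝ) :
    p0vec W θ ω S = (1 - Hmat W θ ω S)⁻¹ *ᵥ directInfluence θ ω S := by
  rw [p0vec, ← mulVec_mulVec, ← diagonal_one, diagonal_sub]
  congr 1
  ext i
  simp only [mulVec_diagonal, mul_comm (1 - θ i), ite_mul, zero_mul, directInfluence]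

lemma sum_p0vec_rankOne
    (h : 1 - ∑ i, c i * (1 - θ i) + ω * ∑ i ∈ S, c i * (1 - θ i) ≠ 0) :
    ∑ i, p0vec (rankOne c) θ ω S i =
      ∑ i, (1 - θ i) - (∑ i, (1 - θ i) - ω * ∑ i ∈ S, (1 - θ i)) *
        ((1 - ∑ i, c i * (1 - θ i)) /
          (1 - ∑ i, c i * (1 - θ i) + ω * ∑ i ∈ S, c i * (1 - θ i))) := by
  have hdenom : 1 - c ⬝ᵥ (1 - θ - directInfluence θ ω S) =
      1 - ∑ i, c i * (1 - θ i) + ω * ∑ i ∈ S, c i * (1 - θ i) := by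
    rw [dotProduct_sub, dotProduct_directInfluence, sub_sub_eq_add_sub, add_sub_right_comm]
    rfl
  rw [p0vec_eq_inv_mulVec_directInfluence, Hmat_rankOne,
    inv_one_sub_vecMulVec_mulVec _ _ _ (hdenom ▸ h), hdenom, dotProduct_directInfluence]
  simp only [Pi.add_apply, Pi.smul_apply, Pi.sub_apply, Pi.one_apply, smul_eq_mul, sum_add_distrib,
    ← mul_sum, sum_sub_distrib _ (directInfluence θ ω S), sum_directInfluence]
  field_simp
  ring

lemma sp0_rankOne_le_of_sum_le (hc : ∀ i, 0 ≤ c i) (hθ : ∀ i, θ i ≤ 1)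
    (hsum : ∑ i, c i * (1 - θ i) < 1) (hω : ω ∈ Set.Icc (0 : ℝ) 1)
    (hle : ∑ i ∈ S, (1 - θ i) ≤ ∑ i ∈ T, (1 - θ i))
    (hcle : ∑ i ∈ S, c i * (1 - θ i) ≤ ∑ i ∈ T, c i * (1 - θ i)) :
    sp0 (rankOne c) θ ω S ≤ sp0 (rankOne c) θ ω T := by
  obtain ⟨hω0, hω1⟩ := hω
  have hsusc (i : Fin n) : 0 ≤ 1 - θ i := sub_nonneg.2 (hθ i)
  have hτ : 0 < 1 - ∑ i, c i * (1 - θ i) := sub_pos.2 hsum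
  have hdenom (U : Finset (Fin n)) :
      0 < 1 - ∑ i, c i * (1 - θ i) + ω * ∑ i ∈ U, c i * (1 - θ i) :=
    add_pos_of_pos_of_nonneg hτ
      (mul_nonneg hω0 (sum_nonneg fun i _ => mul_nonneg (hc i) (hsusc i)))
  have hresidual : 0 ≤ ∑ i, (1 - θ i) - ω * ∑ i ∈ S, (1 - θ i) := by
    refine sub_nonneg.2 ((mul_le_of_le_one_left (sum_nonneg fun i _ => hsusc i) hω1).trans ?_)
    exact sum_le_univ_sum_of_nonneg hsusc
  have hdenomS := hdenom S
  have hratio : 0 ≤ (1 - ∑ i, c i * (1 - θ i)) /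
      (1 - ∑ i, c i * (1 - θ i) + ω * ∑ i ∈ T, c i * (1 - θ i)) := (div_pos hτ (hdenom T)).le
  rw [sp0, sp0, sum_p0vec_rankOne hdenomS.ne', sum_p0vec_rankOne (hdenom T).ne']
  gcongr

end SocialPower

theorem rank_one_balanced_optimal_general
    {n : ℕ} {c θ : Fin n → ℝ} {ω : ℝ} {S S₁ : Finset (Fin n)}
    (hc : ∀ i, 0 ≤ c i) (hθ : ∀ i, θ i ≤ 1) (hsum : ∑ i, c i * (1 - θ i) < 1)
    (hω : ω ∈ Set.Icc (0 : ℝ) 1) (hcard : #S ≤ #S₁)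
    (hbot : ∀ i ∈ S₁, ∀ j ∉ S₁, θ i ≤ θ j)
    (htop : ∀ i ∈ S₁, ∀ j ∉ S₁, c j * (1 - θ j) ≤ c i * (1 - θ i)) :
    sp0 (rankOne c) θ ω S ≤ sp0 (rankOne c) θ ω S₁ := by
  have hsusc (i : Fin n) : 0 ≤ 1 - θ i := sub_nonneg.2 (hθ i)
  exact sp0_rankOne_le_of_sum_le hc hθ hsum hω
    (sum_le_sum_of_card_le_of_forall_notMem_le hsusc hcard fun i hi j hj =>
      sub_le_sub_left (hbot i hi j hj) 1)
    (sum_le_sum_of_card_le_of_forall_notMem_le (fun i => mul_nonneg (hc i) (hsusc i)) hcard htop)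

/-- Rank-one weights with balance `c_i(1-θ_i)` constant: picking the `K` least stubborn
agents maximizes the influencer's social power. -/
theorem rank_one_balanced_optimal
    (n : ℕ) (hn : 1 ≤ n) (c : Fin n → ℝ) (hc : ∀ j, 0 < c j) (hc1 : ∑ j, c j = 1)
    (θ : Fin n → ℝ) (hθ : ∀ i, θ i ∈ Set.Icc (0 : ℝ) 1) (hcθ : 0 < ∑ j, c j * θ j)
    (hbal : ∀ i j : Fin n, c i * (1 - θ i) = c j * (1 - θ j))
    (ω : ℝ) (hω : ω ∈ Set.Ioo (0 : ℝ) 1)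
    (K : ℕ) (hK : 1 ≤ K) (hKn : K ≤ n)
    (S₁ : Finset (Fin n)) (hcard : S₁.card = K)
    (hbot : ∀ i ∈ S₁, ∀ j ∉ S₁, θ i ≤ θ j) :
    ∀ S : Finset (Fin n), S.card ≤ K →
      sp0 (rankOne c) θ ω S ≤ sp0 (rankOne c) θ ω S₁ := by
  intro S hS
  have hsum : ∑ j, c j * (1 - θ j) < 1 := by
    simpa only [mul_sub, mul_one, sum_sub_distrib, hc1] using sub_lt_self 1 hcθ
  exact rank_one_balanced_optimal_general (fun j => (hc j).le) (fun i => (hθ i).2) hsum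
    (Set.Ioo_subset_Icc_self hω) (hS.trans_eq hcard.symm) hbot fun i _ j _ => (hbal j i).le
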